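/- arXiv:1403.0418 — 4 statements merged into one kernel-verified Lean document; each statement's English description precedes it below -/
import Mathlib

section
/- Let 0 ≤ c < 1 and let b ∈ ℝ³ with ‖b‖ < 1. Set ρ_B = (1/2)(I₂ + Σᵢ bᵢσᵢ), let S be the positive semidefinite square root of 2ρ_B, and define ρ = (I₂⊗S)·ρ̃ᵐᵃˣ_c·(I₂⊗S). Then ρ is a two-qubit state whose second-qubit Bloch vector equals b and whose first-qubit Bloch vector a satisfies ‖a‖ < 1, and with γ_a = 1/√(1−‖a‖²), γ_b = 1/√(1−‖b‖²), c_A = γ_b²(a − Tb), c_B = γ_a²(b − Tᵀa), the following hold: γ_b²(1 − ‖c_B‖) = γ_a²(1 − ‖c_A‖), and Bob's steering ellipsoid is also of maximal volume for its centre, i.e. γ_a⁴|det Θ(ρ)| = (1 − ‖c_B‖)². -/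
open Matrix Kronecker Polynomial
open scoped ComplexOrder

noncomputable section

/-- The Pauli matrices: `pauli 0 = I₂`, `pauli 1 = σ₁`, `pauli 2 = σ₂`, `pauli 3 = σ₃`. -/
def pauli : Fin 4 → Matrix (Fin 2) (Fin 2) ℂ
  | 0 => !![1, 0; 0, 1]
  | 1 => !![0, 1; 1, 0]
  | 2 => !![0, -Complex.I; Complex.I, 0]
  | 3 => !![1, 0; 0, -1]

/-- Euclidean norm of a vector in ℝ³. -/
def norm3 (v : Fin 3 → ℝ) : ℝ := Real.sqrt (∑ i, v i ^ 2)

/-- The canonical axis-aligned two-qubit operator with steering-ellipsoid centre `c`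
and signed semiaxes `t`:
`ρ̃(c,t) = (1/4)(I₄ + Σᵢ cᵢ (σᵢ⊗σ₀) + Σᵢ tᵢ (σᵢ⊗σᵢ))`. -/
def rhoTilde (c t : Fin 3 → ℝ) : Matrix (Fin 2 × Fin 2) (Fin 2 × Fin 2) ℂ :=
  (1 / 4 : ℂ) • ((1 : Matrix (Fin 2 × Fin 2) (Fin 2 × Fin 2) ℂ)
    + ∑ i : Fin 3, (c i : ℂ) • (pauli i.succ ⊗ₖ pauli 0)
    + ∑ i : Fin 3, (t i : ℂ) • (pauli i.succ ⊗ₖ pauli i.succ))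

/-- The vector `|ψ_c⟩ = (|01⟩ + √(1−c)|10⟩)/√(2−c)` in the computational basis. -/
def psiC (c : ℝ) : Fin 2 × Fin 2 → ℂ := fun p =>
  if p = (0, 1) then ((1 : ℝ) / Real.sqrt (2 - c) : ℝ)
  else if p = (1, 0) then (Real.sqrt (1 - c) / Real.sqrt (2 - c) : ℝ)
  else 0

/-- The vector `|00⟩` in the computational basis. -/
def ket00 : Fin 2 × Fin 2 → ℂ := fun p => if p = (0, 0) then 1 else 0

/-- The maximal-volume state `ρ̃ᵐᵃˣ_c = (1 − c/2)|ψ_c⟩⟨ψ_c| + (c/2)|00⟩⟨00|`. -/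
def rhoMax (c : ℝ) : Matrix (Fin 2 × Fin 2) (Fin 2 × Fin 2) ℂ :=
  ((1 - c / 2 : ℝ) : ℂ) • Matrix.vecMulVec (psiC c) (star (psiC c))
  + ((c / 2 : ℝ) : ℂ) • Matrix.vecMulVec ket00 (star ket00)

/-- The Pauli-basis expansion matrix `Θ(ρ)_{μν} = Re tr(ρ (σ_μ ⊗ σ_ν))`. -/
def Theta (ρ : Matrix (Fin 2 × Fin 2) (Fin 2 × Fin 2) ℂ) : Matrix (Fin 4) (Fin 4) ℝ :=
  Matrix.of fun μ ν => ((ρ * (pauli μ ⊗ₖ pauli ν)).trace).re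


lemma aux_rhoMax (c s : ℝ) (hs : s = Real.sqrt (1 - c)) (hc1 : c < 1) :
    rhoMax c = rhoTilde ![0, 0, c] ![s, s, -s ^ 2] := by
  have h1 : s ^ 2 = 1 - c := by rw [hs, Real.sq_sqrt (by linarith)]
  obtain ⟨w, hw⟩ : ∃ w : ℝ, w = Real.sqrt (2 - c) := ⟨_, rfl⟩
  have hw2 : w ^ 2 = 2 - c := by rw [hw, Real.sq_sqrt (by linarith)]
  have hwpos : 0 < w := by rw [hw]; exact Real.sqrt_pos.mpr (by linarith)
  have hcw : c = 2 - w ^ 2 := by linarith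
  have hwc : (w : ℂ) ≠ 0 := by exact_mod_cast hwpos.ne'
  have h1c : (s : ℂ) ^ 2 = (w : ℂ) ^ 2 - 1 := by
    have : s ^ 2 = w ^ 2 - 1 := by linarith
    exact_mod_cast this
  ext ⟨i, j⟩ ⟨k, l⟩
  fin_cases i <;> fin_cases j <;> fin_cases k <;> fin_cases l <;>
    simp [rhoMax, rhoTilde, psiC, ket00, pauli, vecMulVec_apply, Fin.sum_univ_three,
      ← hs, ← hw] <;> rw [hcw] <;> push_cast <;> field_simp <;>
    first
    | ring1
    | linear_combination 2 * h1c
    | linear_combination -2 * (w : ℂ) ^ 2 * h1c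
    | linear_combination 2 * (w : ℂ) ^ 2 * h1c
    | linear_combination -h1c

lemma aux_trace (A B P Q S : Matrix (Fin 2) (Fin 2) ℂ) :
    ((pauli 0 ⊗ₖ S) * (A ⊗ₖ B) * (pauli 0 ⊗ₖ S) * (P ⊗ₖ Q)).trace
      = (A * P).trace * (S * B * S * Q).trace := by
  have h : pauli 0 = 1 := by
    ext i j; fin_cases i <;> fin_cases j <;> simp [pauli]
  rw [h, ← mul_kronecker_mul, ← mul_kronecker_mul, ← mul_kronecker_mul, trace_kronecker]
  simp

lemma aux_trace2 (c t : Fin 3 → ℝ) (P Q S : Matrix (Fin 2) (Fin 2) ℂ) :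
    ((pauli 0 ⊗ₖ S) * rhoTilde c t * (pauli 0 ⊗ₖ S) * (P ⊗ₖ Q)).trace
      = (1 / 4) * (P.trace * (S * S * Q).trace
        + ∑ i : Fin 3, (c i : ℂ) * ((pauli i.succ * P).trace * (S * S * Q).trace)
        + ∑ i : Fin 3, (t i : ℂ) * ((pauli i.succ * P).trace *
            (S * pauli i.succ * S * Q).trace)) := by
  have h : pauli 0 = 1 := by
    ext i j; fin_cases i <;> fin_cases j <;> simp [pauli]
  have h1 : (1 : Matrix (Fin 2 × Fin 2) (Fin 2 × Fin 2) ℂ) = pauli 0 ⊗ₖ pauli 0 := by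
    rw [h, one_kronecker_one]
  rw [rhoTilde, h1]
  simp only [Matrix.mul_smul, Matrix.smul_mul, Matrix.mul_add, Matrix.add_mul, Matrix.mul_sum,
    Matrix.sum_mul, trace_smul, trace_add, trace_sum, aux_trace, smul_eq_mul]
  simp [h]

lemma aux_Theta (x0 x1 x2 x3 c s : ℝ) (S : Matrix (Fin 2) (Fin 2) ℂ)
    (hS : S = !![(x0 + x3 : ℂ), x1 - x2 * Complex.I; x1 + x2 * Complex.I, x0 - x3])
    (d : ℝ) (hd : d = x0 ^ 2 - x1 ^ 2 - x2 ^ 2 - x3 ^ 2)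
    (n : ℝ) (hn : n = x0 ^ 2 + x1 ^ 2 + x2 ^ 2 + x3 ^ 2) :
    Theta ((pauli 0 ⊗ₖ S) * rhoTilde ![0, 0, c] ![s, s, -s ^ 2] * (pauli 0 ⊗ₖ S)) =
     !![n, 2*x0*x1, 2*x0*x2, 2*x0*x3;
        s*(2*x0*x1), s*(d+2*x1^2), s*(2*x1*x2), s*(2*x1*x3);
        s*(2*x0*x2), s*(2*x1*x2), s*(d+2*x2^2), s*(2*x2*x3);
        c*n-s^2*(2*x0*x3), c*(2*x0*x1)-s^2*(2*x1*x3), c*(2*x0*x2)-s^2*(2*x2*x3),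
          c*(2*x0*x3)-s^2*(d+2*x3^2)] := by
  ext μ ν
  rw [Theta, of_apply, aux_trace2, hS, hd, hn]
  fin_cases μ <;> fin_cases ν <;>
    (simp [pauli, Fin.sum_univ_three, trace_fin_two, Matrix.mul_apply, Fin.sum_univ_two,
      pow_two]
     try ring)

lemma aux_S (S ρB : Matrix (Fin 2) (Fin 2) ℂ) (b : Fin 3 → ℝ) (hS : S.PosSemidef)
    (hρB : ρB = (1 / 2 : ℂ) • (pauli 0 + ∑ i : Fin 3, (b i : ℂ) • pauli i.succ))
    (hSsq : S * S = (2 : ℂ) • ρB) :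
    ∃ x0 x1 x2 x3 : ℝ,
      S = !![(x0 + x3 : ℂ), x1 - x2 * Complex.I; x1 + x2 * Complex.I, x0 - x3] ∧
      x0 ^ 2 + x1 ^ 2 + x2 ^ 2 + x3 ^ 2 = 1 ∧
      b 0 = 2 * x0 * x1 ∧ b 1 = 2 * x0 * x2 ∧ b 2 = 2 * x0 * x3 := by
  have hH := hS.isHermitian
  have h00 := hH.apply 0 0
  have h11 := hH.apply 1 1
  have h01 := hH.apply 0 1
  have hSx : S = !![((((S 0 0).re + (S 1 1).re) / 2 : ℝ) + (((S 0 0).re - (S 1 1).re) / 2 : ℝ) : ℂ),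
      ((S 1 0).re : ℝ) - ((S 1 0).im : ℝ) * Complex.I;
      ((S 1 0).re : ℝ) + ((S 1 0).im : ℝ) * Complex.I,
      ((((S 0 0).re + (S 1 1).re) / 2 : ℝ) - (((S 0 0).re - (S 1 1).re) / 2 : ℝ) : ℂ)] := by
    simp only [Complex.ext_iff, Complex.star_def, Complex.conj_re, Complex.conj_im] at h00 h11 h01
    ext i j
    fin_cases i <;> fin_cases j <;> simp [Complex.ext_iff] <;> (try constructor) <;> linarith
  refine ⟨_, _, _, _, hSx, ?_⟩
  generalize ((S 0 0).re + (S 1 1).re) / 2 = x0 at hSx ⊢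
  generalize ((S 0 0).re - (S 1 1).re) / 2 = x3 at hSx ⊢
  generalize (S 1 0).re = x1 at hSx ⊢
  generalize (S 1 0).im = x2 at hSx ⊢
  rw [hρB, hSx] at hSsq
  have e00 := congrFun (congrFun hSsq 0) 0
  have e11 := congrFun (congrFun hSsq 1) 1
  have e10 := congrFun (congrFun hSsq 1) 0
  simp [pauli, Fin.sum_univ_three, Matrix.mul_apply, Fin.sum_univ_two, Complex.ext_iff]
    at e00 e11 e10
  obtain ⟨e10, e10'⟩ := e10
  refine ⟨?_, ?_, ?_, ?_⟩ <;> nlinarith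

lemma aux_psd (c : ℝ) (hc0 : 0 ≤ c) (hc1 : c < 1) : (rhoMax c).PosSemidef := by
  unfold rhoMax
  refine PosSemidef.add (PosSemidef.smul (posSemidef_vecMulVec_self_star _) ?_)
    (PosSemidef.smul (posSemidef_vecMulVec_self_star _) ?_)
  · exact_mod_cast (by linarith : (0 : ℝ) ≤ 1 - c / 2)
  · exact_mod_cast (by linarith : (0 : ℝ) ≤ c / 2)

lemma aux_psd2 (c : ℝ) (hc0 : 0 ≤ c) (hc1 : c < 1) (S : Matrix (Fin 2) (Fin 2) ℂ)
    (hS : S.PosSemidef) : ((pauli 0 ⊗ₖ S) * rhoMax c * (pauli 0 ⊗ₖ S)).PosSemidef := by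
  have h : pauli 0 = 1 := by
    ext i j; fin_cases i <;> fin_cases j <;> simp [pauli]
  have := (aux_psd c hc0 hc1).mul_mul_conjTranspose_same (pauli 0 ⊗ₖ S)
  rwa [conjTranspose_kronecker, hS.isHermitian.eq, h, conjTranspose_one, ← h] at this

/-- Boosting the maximal-volume state: `ρ = (I₂⊗S)ρ̃ᵐᵃˣ_c(I₂⊗S)` with `S` the PSD
square root of `2ρ_B` is a state with Bob's Bloch vector `b`, Alice's Bloch vector of
norm `< 1`, the ellipsoid centres satisfy `γ_b²(1 − ‖c_B‖) = γ_a²(1 − ‖c_A‖)`, and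
Bob's steering ellipsoid is also maximal volume: `γ_a⁴|det Θ(ρ)| = (1 − ‖c_B‖)²`. -/
theorem stmt15 (c : ℝ) (hc0 : 0 ≤ c) (hc1 : c < 1)
    (b : Fin 3 → ℝ) (hb1 : norm3 b < 1)
    (ρB : Matrix (Fin 2) (Fin 2) ℂ)
    (hρB : ρB = (1 / 2 : ℂ) • (pauli 0 + ∑ i : Fin 3, (b i : ℂ) • pauli i.succ))
    (S : Matrix (Fin 2) (Fin 2) ℂ) (hS : S.PosSemidef) (hSsq : S * S = (2 : ℂ) • ρB)
    (ρ : Matrix (Fin 2 × Fin 2) (Fin 2 × Fin 2) ℂ)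
    (hρ : ρ = (pauli 0 ⊗ₖ S) * rhoMax c * (pauli 0 ⊗ₖ S))
    (a : Fin 3 → ℝ) (ha : ∀ i, a i = Theta ρ i.succ 0) :
    ρ.PosSemidef ∧ ρ.trace = 1
    ∧ (∀ j, Theta ρ 0 j.succ = b j)
    ∧ norm3 a < 1
    ∧ (let γa : ℝ := 1 / Real.sqrt (1 - norm3 a ^ 2)
       let γb : ℝ := 1 / Real.sqrt (1 - norm3 b ^ 2)
       let cA : Fin 3 → ℝ :=
         fun i => γb ^ 2 * (a i - ∑ j, Theta ρ i.succ j.succ * b j)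
       let cB : Fin 3 → ℝ :=
         fun j => γa ^ 2 * (b j - ∑ i, Theta ρ i.succ j.succ * a i)
       γb ^ 2 * (1 - norm3 cB) = γa ^ 2 * (1 - norm3 cA)
       ∧ γa ^ 4 * |(Theta ρ).det| = (1 - norm3 cB) ^ 2) := by
  obtain ⟨x0, x1, x2, x3, hSx, hn, hb0, hb1', hb2⟩ := aux_S S ρB b hS hρB hSsq
  have hpsd : ρ.PosSemidef := hρ ▸ aux_psd2 c hc0 hc1 S hS
  obtain ⟨s, hs⟩ : ∃ s : ℝ, s = Real.sqrt (1 - c) := ⟨_, rfl⟩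
  have hs2 : s ^ 2 = 1 - c := by rw [hs, Real.sq_sqrt (by linarith)]
  have hT := aux_Theta x0 x1 x2 x3 c s S hSx _ rfl 1 hn.symm
  rw [← aux_rhoMax c s hs hc1, ← hρ] at hT
  set d := x0 ^ 2 - x1 ^ 2 - x2 ^ 2 - x3 ^ 2 with hd
  have htr : ρ.trace = 1 := by
    have him : (ρ.trace).im = 0 := by
      have h := hpsd.trace_nonneg
      exact (Complex.le_def.mp h).2.symm
    have hre : (ρ.trace).re = 1 := by
      have h := congrFun (congrFun hT 0) 0
      have h1 : pauli 0 = 1 := by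
        ext i j; fin_cases i <;> fin_cases j <;> simp [pauli]
      simpa [Theta, h1] using h
    exact Complex.ext (by simpa using hre) (by simpa using him)
  have ha0 : a 0 = s * b 0 := by rw [ha, hT, hb0]; simp
  have ha1 : a 1 = s * b 1 := by rw [ha, hT, hb1']; simp
  have ha2 : a 2 = c - s ^ 2 * b 2 := by rw [ha, hT, hb2]; simp
  -- squared norms
  have hB : norm3 b ^ 2 = b 0 ^ 2 + b 1 ^ 2 + b 2 ^ 2 := by
    rw [norm3, Real.sq_sqrt (by positivity), Fin.sum_univ_three]
  have hA : norm3 a ^ 2 = a 0 ^ 2 + a 1 ^ 2 + a 2 ^ 2 := by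
    rw [norm3, Real.sq_sqrt (by positivity), Fin.sum_univ_three]
  have hBpos : 0 < 1 - norm3 b ^ 2 := by
    have : 0 ≤ norm3 b := Real.sqrt_nonneg _
    nlinarith
  have hd2 : 1 - norm3 b ^ 2 = d ^ 2 := by
    rw [hB, hb0, hb1', hb2, hd]
    linear_combination (-(x0 ^ 2 + x1 ^ 2 + x2 ^ 2 + x3 ^ 2) - 1) * hn
  have hAeq : 1 - norm3 a ^ 2
      = (1 - c) * ((1 - norm3 b ^ 2) + c * (1 + b 2) ^ 2) := by
    rw [hA, hB, ha0, ha1, ha2, mul_pow, mul_pow, hs2]; ring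
  have hDpos : 0 < (1 - norm3 b ^ 2) + c * (1 + b 2) ^ 2 := by positivity
  have hApos : 0 < 1 - norm3 a ^ 2 := by
    rw [hAeq]; exact mul_pos (by linarith) hDpos
  have hA1 : norm3 a < 1 := by
    have : 0 ≤ norm3 a := Real.sqrt_nonneg _
    nlinarith
  have hb3 : 0 ≤ 1 + b 2 := by
    nlinarith [sq_nonneg (b 0), sq_nonneg (b 1)]
  refine ⟨hpsd, htr, ?_, hA1, ?_⟩
  · intro j
    rw [hT]
    fin_cases j <;> simp [hb0, hb1', hb2]
  intro γa γb cA cB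
  have hγa : γa ^ 2 = 1 / (1 - norm3 a ^ 2) := by
    simp only [γa]; rw [div_pow, Real.sq_sqrt hApos.le, one_pow]
  have hγb : γb ^ 2 = 1 / (1 - norm3 b ^ 2) := by
    simp only [γb]; rw [div_pow, Real.sq_sqrt hBpos.le, one_pow]
  have hcA : norm3 cA = c := by
    have e0 : cA 0 = 0 := by
      simp only [cA, hT, Fin.sum_univ_three, ha0]
      simp [hb0, hb1', hb2]
      right
      rw [hd]
      linear_combination (-2 * s * x0 * x1) * hn
    have e1 : cA 1 = 0 := by
      simp only [cA, hT, Fin.sum_univ_three, ha1]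
      simp [hb0, hb1', hb2]
      right
      rw [hd]
      linear_combination (-2 * s * x0 * x2) * hn
    have e2 : cA 2 = c := by
      have : a 2 - ∑ j, Theta ρ (Fin.succ 2) j.succ * b j = c * (1 - norm3 b ^ 2) := by
        simp only [hT, Fin.sum_univ_three, ha2, hB]
        simp [hb0, hb1', hb2]
        rw [hd]
        linear_combination (2 * s ^ 2 * x0 * x3) * hn
      simp only [cA]
      rw [this, hγb]
      field_simp
    rw [norm3, Fin.sum_univ_three, e0, e1, e2]
    simpa using Real.sqrt_sq hc0
  have hcs : c = 1 - s ^ 2 := by linarith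
  have hcB : norm3 cB = γa ^ 2 * ((1 - c) * c * (1 + b 2) ^ 2) := by
    have e0 : cB 0 = γa ^ 2 * ((1 - c) * c * (1 + b 2)) * (b 0 + 2 * x1 * x3) := by
      simp only [cB, hT, Fin.sum_univ_three, ha0, ha1, ha2]
      simp [hb0, hb1', hb2]
      rw [hcs, hd]
      linear_combination (-2 * γa ^ 2 * s ^ 2 * x0 * x1) * hn
    have e1 : cB 1 = γa ^ 2 * ((1 - c) * c * (1 + b 2)) * (b 1 + 2 * x2 * x3) := by
      simp only [cB, hT, Fin.sum_univ_three, ha0, ha1, ha2]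
      simp [hb0, hb1', hb2]
      rw [hcs, hd]
      linear_combination (-2 * γa ^ 2 * s ^ 2 * x0 * x2) * hn
    have e2 : cB 2 = γa ^ 2 * ((1 - c) * c * (1 + b 2)) * (b 2 + d + 2 * x3 ^ 2) := by
      simp only [cB, hT, Fin.sum_univ_three, ha0, ha1, ha2]
      simp [hb0, hb1', hb2]
      rw [hcs, hd]
      linear_combination (-2 * γa ^ 2 * s ^ 2 * x0 * x3) * hn
    have hnull : (b 0 + 2 * x1 * x3) ^ 2 + (b 1 + 2 * x2 * x3) ^ 2 + (b 2 + d + 2 * x3 ^ 2) ^ 2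
        = (1 + b 2) ^ 2 := by
      rw [hb0, hb1', hb2, hd]
      linear_combination (x0 ^ 2 + x1 ^ 2 + x2 ^ 2 + x3 ^ 2 + 1 + 4 * x0 * x3) * hn
    have hc1' : 0 ≤ 1 - c := by linarith
    rw [norm3, Fin.sum_univ_three, e0, e1, e2]
    rw [show ∀ g p q r : ℝ, (g * p) ^ 2 + (g * q) ^ 2 + (g * r) ^ 2
      = g ^ 2 * (p ^ 2 + q ^ 2 + r ^ 2) by intros; ring, hnull, ← mul_pow,
      Real.sqrt_sq (by positivity)]
    ring
  have hdet : |(Theta ρ).det| = (1 - c) ^ 2 * (1 - norm3 b ^ 2) ^ 2 := by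
    have : (Theta ρ).det = -((1 - c) ^ 2 * (1 - norm3 b ^ 2) ^ 2) := by
      rw [hT, hd2, ← hs2]
      simp [Matrix.det_succ_row_zero, Fin.sum_univ_succ, Fin.succAbove]
      rw [hd]
      linear_combination (s ^ 4 * (x0 ^ 2 - x1 ^ 2 - x2 ^ 2 - x3 ^ 2) ^ 2
        * (x0 ^ 2 + x1 ^ 2 + x2 ^ 2 + x3 ^ 2)) * hn
    rw [this, abs_neg, abs_of_nonneg (by positivity)]
  have h1c : 1 - c ≠ 0 := by linarith
  have key : 1 - norm3 cB = (1 - norm3 b ^ 2) / ((1 - norm3 b ^ 2) + c * (1 + b 2) ^ 2) := by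
    rw [hcB, hγa, hAeq]
    field_simp
    ring
  refine ⟨?_, ?_⟩
  · rw [key, hcA, hγa, hγb, hAeq]
    field_simp
  · rw [key, show γa ^ 4 = (γa ^ 2) ^ 2 by ring, hγa, hAeq, hdet]
    field_simp
end
end

section
/- Let 0 ≤ c ≤ 1 and let φ ∈ ℂ²⊗ℂ²⊗ℂ² be the unit vector φ = (1/√2)(√c·|001⟩ + |010⟩ + √(1−c)·|100⟩), with qubits ordered Alice, Bob, Charlie. Then: (i) the reduced state of |φ⟩⟨φ| on qubits (A,B) equals ρ̃ᵐᵃˣ_c; (ii) the reduced state on qubits (C,B), i.e. the matrix with entries M_{(γ,b),(γ',b')} = Σ_a φ_{a b γ}·conj(φ_{a b' γ'}), equals ρ̃ᵐᵃˣ_{1−c}. Hence both ellipsoids steered by Bob are of maximal volume and their centres obey c_{A|B} + c_{C|B} = c + (1−c) = 1. -/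
open Matrix Kronecker Polynomial
open scoped ComplexOrder

noncomputable section

/-- The purification `φ = (1/√2)(√c|001⟩ + |010⟩ + √(1−c)|100⟩)` (qubits ordered
Alice, Bob, Charlie). -/
def phiTri (c : ℝ) : Fin 2 → Fin 2 → Fin 2 → ℂ := fun a b γ =>
  if a = 0 ∧ b = 0 ∧ γ = 1 then (Real.sqrt c / Real.sqrt 2 : ℝ)
  else if a = 0 ∧ b = 1 ∧ γ = 0 then ((1 : ℝ) / Real.sqrt 2 : ℝ)
  else if a = 1 ∧ b = 0 ∧ γ = 0 then (Real.sqrt (1 - c) / Real.sqrt 2 : ℝ)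
  else 0

/-- Entrywise form of the maximal-volume state. -/
lemma rhoMax_entry (c : ℝ) (hc1 : c ≤ 1) (p q : Fin 2 × Fin 2) :
    rhoMax c p q =
      (if p = (0, 1) then (1 / Real.sqrt 2 : ℂ)
        else if p = (1, 0) then (Real.sqrt (1 - c) / Real.sqrt 2 : ℂ) else 0) *
      (if q = (0, 1) then (1 / Real.sqrt 2 : ℂ)
        else if q = (1, 0) then (Real.sqrt (1 - c) / Real.sqrt 2 : ℂ) else 0)
      + (if p = (0, 0) ∧ q = (0, 0) then (c / 2 : ℂ) else 0) := by
  have h2 : ((Real.sqrt 2 : ℝ) : ℂ) ^ 2 = 2 := by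
    rw [← Complex.ofReal_pow, Real.sq_sqrt (by norm_num)]; norm_num
  have h2c : ((Real.sqrt (2 - c) : ℝ) : ℂ) ^ 2 = 2 - c := by
    rw [← Complex.ofReal_pow, Real.sq_sqrt (by linarith)]; push_cast; ring
  have n2 : ((Real.sqrt 2 : ℝ) : ℂ) ≠ 0 := by
    intro h; rw [h] at h2; norm_num at h2
  have n2c : ((Real.sqrt (2 - c) : ℝ) : ℂ) ≠ 0 := by
    have : 0 < Real.sqrt (2 - c) := Real.sqrt_pos.mpr (by linarith)
    exact_mod_cast ne_of_gt this
  have key : (1 - (c : ℂ) / 2) * (1 / (Real.sqrt (2 - c) : ℂ) * (1 / (Real.sqrt (2 - c) : ℂ)))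
      = 1 / (Real.sqrt 2 : ℂ) * (1 / (Real.sqrt 2 : ℂ)) := by
    field_simp
    rw [h2, h2c]; ring
  obtain ⟨a, b⟩ := p
  obtain ⟨x, y⟩ := q
  fin_cases a <;> fin_cases b <;> fin_cases x <;> fin_cases y <;>
    simp [rhoMax, psiC, ket00, Matrix.vecMulVec_apply] <;>
    first
    | linear_combination key
    | linear_combination (Real.sqrt (1 - c) : ℂ) * key
    | linear_combination (Real.sqrt (1 - c) : ℂ) ^ 2 * key

/-- Both ellipsoids steered by Bob in the purification of a maximal-volume state are
maximal volume: the (A,B) reduced state is `ρ̃ᵐᵃˣ_c`, the (C,B) reduced state is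
`ρ̃ᵐᵃˣ_{1−c}`, and the centres obey `c + (1−c) = 1`. -/
theorem stmt16 (c : ℝ) (hc0 : 0 ≤ c) (hc1 : c ≤ 1) :
    (Matrix.of fun p q : Fin 2 × Fin 2 =>
        ∑ γ : Fin 2, phiTri c p.1 p.2 γ * (starRingEnd ℂ) (phiTri c q.1 q.2 γ))
      = rhoMax c
    ∧ (Matrix.of fun p q : Fin 2 × Fin 2 =>
        ∑ a : Fin 2, phiTri c a p.2 p.1 * (starRingEnd ℂ) (phiTri c a q.2 q.1))
      = rhoMax (1 - c)
    ∧ c + (1 - c) = 1 := by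
  have h2 : ((Real.sqrt 2 : ℝ) : ℂ) ^ 2 = 2 := by
    rw [← Complex.ofReal_pow, Real.sq_sqrt (by norm_num)]; norm_num
  have n2 : ((Real.sqrt 2 : ℝ) : ℂ) ≠ 0 := by
    intro h; rw [h] at h2; norm_num at h2
  have hc : ((Real.sqrt c : ℝ) : ℂ) ^ 2 = c := by
    rw [← Complex.ofReal_pow, Real.sq_sqrt hc0]
  have hd : ((Real.sqrt (1 - c) : ℝ) : ℂ) ^ 2 = 1 - c := by
    rw [← Complex.ofReal_pow, Real.sq_sqrt (by linarith)]; push_cast; ring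
  have e1 : (Real.sqrt c / Real.sqrt 2 * (Real.sqrt c / Real.sqrt 2) : ℂ) = c / 2 := by
    rw [div_mul_div_comm, ← sq, ← sq, hc, h2]
  have e2 : (Real.sqrt (1 - c) / Real.sqrt 2 * (Real.sqrt (1 - c) / Real.sqrt 2) : ℂ)
      = (1 - c) / 2 := by
    rw [div_mul_div_comm, ← sq, ← sq, hd, h2]
  refine ⟨?_, ?_, by ring⟩
  · ext ⟨a, b⟩ ⟨x, y⟩
    rw [rhoMax_entry c hc1]
    fin_cases a <;> fin_cases b <;> fin_cases x <;> fin_cases y <;>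
      simp [phiTri, e1]
  · ext ⟨a, b⟩ ⟨x, y⟩
    rw [rhoMax_entry (1 - c) (by linarith)]
    fin_cases a <;> fin_cases b <;> fin_cases x <;> fin_cases y <;>
      simp [phiTri, e2]
end
end

section
/- (Monogamy of steering.) Let ψ be a unit vector in ℂ²⊗ℂ²⊗ℂ² (qubits ordered Alice, Bob, Charlie), let b be Bob's Bloch vector, bⱼ = Re tr(ρ_B σⱼ), and assume ‖b‖ < 1; set γ_b = 1/√(1−‖b‖²). Define the volumes of the ellipsoids steered by Bob: V_{A|B} = (4π/3)γ_b⁴|det Θ(ρ_{AB})| and V_{C|B} = (4π/3)γ_b⁴|det Θ(ρ_{BC})|. Then √V_{A|B} + √V_{C|B} ≤ √(4π/3); equivalently √|det Θ(ρ_{AB})| + √|det Θ(ρ_{BC})| ≤ 1 − ‖b‖². -/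
open Matrix Kronecker Polynomial
open scoped ComplexOrder

noncomputable section

/-- Reduced state of a family of two coefficient matrices. -/
def redState (P : Fin 2 → Fin 2 → Fin 2 → ℂ) : Matrix (Fin 2 × Fin 2) (Fin 2 × Fin 2) ℂ :=
  Matrix.of fun p q : Fin 2 × Fin 2 =>
      ∑ γ : Fin 2, P γ p.1 p.2 * (starRingEnd ℂ) (P γ q.1 q.2)

def pDet (P : Fin 2 → Fin 2 → Fin 2 → ℂ) (γ : Fin 2) : ℂ :=
  P γ 0 0 * P γ 1 1 - P γ 0 1 * P γ 1 0

def pMix (P : Fin 2 → Fin 2 → Fin 2 → ℂ) : ℂ :=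
  P 0 0 0 * P 1 1 1 + P 1 0 0 * P 0 1 1 - P 0 0 1 * P 1 1 0 - P 1 0 1 * P 0 1 0

/-- The quantity `tr (ρ ρ̃)`. -/
def tangle (P : Fin 2 → Fin 2 → Fin 2 → ℂ) : ℝ :=
  4 * Complex.normSq (pDet P 0) + 4 * Complex.normSq (pDet P 1) + 2 * Complex.normSq (pMix P)

def pauliCoord : Matrix (Fin 4) (Fin 4) ℂ :=
  !![1, 0, 0, 1; 0, 1, 1, 0; 0, Complex.I, -Complex.I, 0; 1, 0, 0, -1]

/-- Realigned matrix, with independent conjugate coefficients. -/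
def realigned (P Q : Fin 2 → Fin 2 → Fin 2 → ℂ) : Matrix (Fin 4) (Fin 4) ℂ :=
  let e : Fin 2 → Fin 2 → Fin 2 → Fin 2 → ℂ := fun i k j l => P 0 i j * Q 0 k l + P 1 i j * Q 1 k l
  !![e 0 0 0 0, e 0 0 0 1, e 0 0 1 0, e 0 0 1 1;
     e 0 1 0 0, e 0 1 0 1, e 0 1 1 0, e 0 1 1 1;
     e 1 0 0 0, e 1 0 0 1, e 1 0 1 0, e 1 0 1 1;
     e 1 1 0 0, e 1 1 0 1, e 1 1 1 0, e 1 1 1 1]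

lemma det_four (A : Matrix (Fin 4) (Fin 4) ℂ) : A.det =
    (A 0 0 * A 1 1 - A 0 1 * A 1 0) * (A 2 2 * A 3 3 - A 2 3 * A 3 2)
    - (A 0 0 * A 1 2 - A 0 2 * A 1 0) * (A 2 1 * A 3 3 - A 2 3 * A 3 1)
    + (A 0 0 * A 1 3 - A 0 3 * A 1 0) * (A 2 1 * A 3 2 - A 2 2 * A 3 1)
    + (A 0 1 * A 1 2 - A 0 2 * A 1 1) * (A 2 0 * A 3 3 - A 2 3 * A 3 0)
    - (A 0 1 * A 1 3 - A 0 3 * A 1 1) * (A 2 0 * A 3 2 - A 2 2 * A 3 0)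
    + (A 0 2 * A 1 3 - A 0 3 * A 1 2) * (A 2 0 * A 3 1 - A 2 1 * A 3 0) := by
  simp [Matrix.det_succ_row_zero, Fin.sum_univ_succ, Fin.succAbove]
  ring

set_option maxHeartbeats 4000000 in
lemma det_realigned (P Q : Fin 2 → Fin 2 → Fin 2 → ℂ) :
    16 * (realigned P Q).det =
      (4 * (pDet P 0 * pDet Q 0) + 4 * (pDet P 1 * pDet Q 1) + 2 * (pMix P * pMix Q)) ^ 2
      - 4 * ((4 * pDet P 0 * pDet P 1 - pMix P ^ 2) * (4 * pDet Q 0 * pDet Q 1 - pMix Q ^ 2)) := by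
  rw [det_four]
  simp only [realigned, pDet, pMix, Matrix.of_apply, Matrix.cons_val]
  ring

lemma det_pauliCoord : pauliCoord.det ^ 2 = -16 := by
  have h := Complex.I_sq
  rw [det_four]
  simp only [pauliCoord, Matrix.of_apply, Matrix.cons_val]
  linear_combination 16 * h

lemma pauli_herm (μ : Fin 4) : (pauli μ)ᴴ = pauli μ := by
  fin_cases μ <;> ext i j <;> fin_cases i <;> fin_cases j <;> simp [pauli]

lemma redState_herm (P : Fin 2 → Fin 2 → Fin 2 → ℂ) : (redState P)ᴴ = redState P := by
  ext i j
  simp [redState, Matrix.conjTranspose_apply, mul_comm]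

lemma theta_coe (P : Fin 2 → Fin 2 → Fin 2 → ℂ) (μ ν : Fin 4) :
    ((Theta (redState P) μ ν : ℝ) : ℂ) = (redState P * (pauli μ ⊗ₖ pauli ν)).trace := by
  have h : (starRingEnd ℂ) (redState P * (pauli μ ⊗ₖ pauli ν)).trace
      = (redState P * (pauli μ ⊗ₖ pauli ν)).trace := by
    rw [starRingEnd_apply, ← Matrix.trace_conjTranspose, Matrix.conjTranspose_mul,
      Matrix.conjTranspose_kronecker, pauli_herm, pauli_herm, redState_herm, Matrix.trace_mul_comm]
  exact Complex.conj_eq_iff_re.mp h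

set_option maxHeartbeats 4000000 in
lemma theta_factor (P : Fin 2 → Fin 2 → Fin 2 → ℂ) :
    (Theta (redState P)).map Complex.ofRealHom
      = pauliCoord * realigned P (fun γ i j => (starRingEnd ℂ) (P γ i j)) * pauliCoordᵀ := by
  ext μ ν
  rw [Matrix.map_apply, Complex.ofRealHom_eq_coe, theta_coe]
  simp only [Matrix.trace, Matrix.diag, Matrix.mul_apply, Fintype.sum_prod_type, Fin.sum_univ_four,
    Fin.sum_univ_two, redState, Matrix.of_apply, Matrix.kroneckerMap_apply, Matrix.transpose_apply]
  fin_cases μ <;> fin_cases ν <;>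
  · simp [pauli, pauliCoord, realigned]
    try ring_nf
    try simp only [Complex.I_sq]
    try ring_nf

lemma det_theta (P : Fin 2 → Fin 2 → Fin 2 → ℂ) :
    (Theta (redState P)).det =
      -(tangle P ^ 2 - 4 * Complex.normSq (4 * pDet P 0 * pDet P 1 - pMix P ^ 2)) := by
  apply Complex.ofReal_injective
  have h1 : (((Theta (redState P)).det : ℝ) : ℂ)
      = ((Theta (redState P)).map Complex.ofRealHom).det := by
    rw [← Complex.ofRealHom_eq_coe, RingHom.map_det]; rfl
  have h2 := det_realigned P (fun γ i j => (starRingEnd ℂ) (P γ i j))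
  have hp : ∀ γ, pDet (fun γ i j => (starRingEnd ℂ) (P γ i j)) γ = (starRingEnd ℂ) (pDet P γ) := by
    intro γ; simp [pDet]
  have hm : pMix (fun γ i j => (starRingEnd ℂ) (P γ i j)) = (starRingEnd ℂ) (pMix P) := by
    simp [pMix]
  rw [hp, hp, hm] at h2
  rw [h1, theta_factor, Matrix.det_mul, Matrix.det_mul, Matrix.det_transpose]
  simp only [tangle, Complex.ofReal_neg, Complex.ofReal_sub, Complex.ofReal_mul,
    Complex.ofReal_pow, Complex.ofReal_add, Complex.normSq_eq_conj_mul_self, map_sub, map_mul,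
    map_pow]
  have h4 : (starRingEnd ℂ) (4 : ℂ) = 4 := Complex.conj_ofNat 4
  rw [h4]
  push_cast
  linear_combination (realigned P (fun γ i j => (starRingEnd ℂ) (P γ i j))).det * det_pauliCoord
    - h2

lemma tangle_nonneg (P : Fin 2 → Fin 2 → Fin 2 → ℂ) : 0 ≤ tangle P := by
  have := Complex.normSq_nonneg (pDet P 0)
  have := Complex.normSq_nonneg (pDet P 1)
  have := Complex.normSq_nonneg (pMix P)
  unfold tangle; positivity

lemma abs_det_theta_le (P : Fin 2 → Fin 2 → Fin 2 → ℂ) :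
    |(Theta (redState P)).det| ≤ tangle P ^ 2 := by
  rw [det_theta, abs_neg]
  have h0 := Complex.normSq_nonneg (4 * pDet P 0 * pDet P 1 - pMix P ^ 2)
  have hT := tangle_nonneg P
  have h1 : ‖4 * pDet P 0 * pDet P 1 - pMix P ^ 2‖ ≤ tangle P / 2 := by
    refine (norm_sub_le _ _).trans ?_
    simp only [norm_mul, norm_pow, tangle, Complex.normSq_eq_norm_sq, Complex.norm_ofNat]
    nlinarith [sq_nonneg (‖pDet P 0‖ - ‖pDet P 1‖)]
  have h2 : Complex.normSq (4 * pDet P 0 * pDet P 1 - pMix P ^ 2) ≤ (tangle P / 2) ^ 2 := by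
    rw [Complex.normSq_eq_norm_sq]
    gcongr
  rw [abs_le]
  constructor <;> nlinarith

set_option maxHeartbeats 4000000 in
lemma tangle_sum (ψ : Fin 2 → Fin 2 → Fin 2 → ℂ) (ρB : Matrix (Fin 2) (Fin 2) ℂ)
    (hB : ρB = Matrix.of fun b b' : Fin 2 =>
      ∑ a : Fin 2, ∑ γ : Fin 2, ψ a b γ * (starRingEnd ℂ) (ψ a b' γ))
    (b : Fin 3 → ℝ) (hb : ∀ j, b j = ((ρB * pauli j.succ).trace).re) :
    tangle (fun γ a b => ψ a b γ) + tangle ψ =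
      (∑ a : Fin 2, ∑ b : Fin 2, ∑ c : Fin 2, Complex.normSq (ψ a b c)) ^ 2 - ∑ i, b i ^ 2 := by
  have e1 : pauli (Fin.succ 0) = !![0, 1; 1, 0] := rfl
  have e2 : pauli (Fin.succ 1) = !![0, -Complex.I; Complex.I, 0] := rfl
  have e3 : pauli (Fin.succ 2) = !![1, 0; 0, -1] := rfl
  rw [Fin.sum_univ_three, hb, hb, hb, e1, e2, e3, hB]
  simp [Matrix.trace, Matrix.mul_apply, Fin.sum_univ_two, tangle, pDet, pMix, Complex.normSq_apply]
  ring

/-- Monogamy of steering: for a pure three-qubit state,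
`√V_{A|B} + √V_{C|B} ≤ √(4π/3)`, where `V_{A|B} = (4π/3)γ_b⁴|det Θ(ρ_AB)|` and
`V_{C|B} = (4π/3)γ_b⁴|det Θ(ρ_BC)|` are the volumes of the ellipsoids steered by Bob. -/
theorem stmt18 (ψ : Fin 2 → Fin 2 → Fin 2 → ℂ)
    (hunit : ∑ a : Fin 2, ∑ b : Fin 2, ∑ c : Fin 2, Complex.normSq (ψ a b c) = 1)
    (ρAB : Matrix (Fin 2 × Fin 2) (Fin 2 × Fin 2) ℂ)
    (hAB : ρAB = Matrix.of fun p q : Fin 2 × Fin 2 =>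
      ∑ γ : Fin 2, ψ p.1 p.2 γ * (starRingEnd ℂ) (ψ q.1 q.2 γ))
    (ρBC : Matrix (Fin 2 × Fin 2) (Fin 2 × Fin 2) ℂ)
    (hBC : ρBC = Matrix.of fun p q : Fin 2 × Fin 2 =>
      ∑ a : Fin 2, ψ a p.1 p.2 * (starRingEnd ℂ) (ψ a q.1 q.2))
    (ρB : Matrix (Fin 2) (Fin 2) ℂ)
    (hB : ρB = Matrix.of fun b b' : Fin 2 =>
      ∑ a : Fin 2, ∑ γ : Fin 2, ψ a b γ * (starRingEnd ℂ) (ψ a b' γ))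
    (b : Fin 3 → ℝ) (hb : ∀ j, b j = ((ρB * pauli j.succ).trace).re)
    (hb1 : norm3 b < 1)
    (γb : ℝ) (hγb : γb = 1 / Real.sqrt (1 - norm3 b ^ 2)) :
    Real.sqrt ((4 * Real.pi / 3) * γb ^ 4 * |(Theta ρAB).det|)
      + Real.sqrt ((4 * Real.pi / 3) * γb ^ 4 * |(Theta ρBC).det|)
      ≤ Real.sqrt (4 * Real.pi / 3) := by
  have hA' : ρAB = redState (fun γ a b => ψ a b γ) := hAB
  have hC' : ρBC = redState ψ := hBC
  have hsum := tangle_sum ψ ρB hB b hb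
  have hn : norm3 b ^ 2 = ∑ i, b i ^ 2 :=
    Real.sq_sqrt (Finset.sum_nonneg fun i _ => sq_nonneg _)
  rw [hunit, ← hn] at hsum
  have hn0 : 0 ≤ norm3 b := Real.sqrt_nonneg _
  have hpos : 0 < 1 - norm3 b ^ 2 := by nlinarith
  have hγ4 : γb ^ 4 = (1 / (1 - norm3 b ^ 2)) ^ 2 := by
    have : γb ^ 2 = 1 / (1 - norm3 b ^ 2) := by
      rw [hγb, div_pow, Real.sq_sqrt hpos.le, one_pow]
    rw [← this]; ring
  have hπ : 0 ≤ 4 * Real.pi / 3 := by positivity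
  have key : ∀ P : Fin 2 → Fin 2 → Fin 2 → ℂ,
      Real.sqrt ((4 * Real.pi / 3) * γb ^ 4 * |(Theta (redState P)).det|)
        ≤ Real.sqrt (4 * Real.pi / 3) * (1 / (1 - norm3 b ^ 2) * tangle P) := by
    intro P
    have hT := tangle_nonneg P
    have h0 : 0 ≤ 1 / (1 - norm3 b ^ 2) * tangle P := by positivity
    rw [← Real.sqrt_sq h0, ← Real.sqrt_mul hπ]
    apply Real.sqrt_le_sqrt
    rw [hγ4, mul_pow, mul_assoc]
    have := abs_det_theta_le P
    gcongr
  rw [hA', hC']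
  refine (add_le_add (key _) (key _)).trans (le_of_eq ?_)
  rw [← mul_add, ← mul_add, hsum]
  field_simp
end
end

section
/- (CKW monogamy of concurrence.) Let ψ be a unit vector in ℂ²⊗ℂ²⊗ℂ² (qubits ordered Alice, Bob, Charlie). Then the squared concurrences of the two-qubit reduced states satisfy C(ρ_{AB})² + C(ρ_{BC})² ≤ 4·det ρ_B, where det ρ_B is real and nonnegative since ρ_B is a 2×2 positive semidefinite matrix. -/
open Matrix Kronecker Polynomial
open scoped ComplexOrder

noncomputable section

/-- The spin-flipped matrix `ρ̂ = (σ₂⊗σ₂)·conj(ρ)·(σ₂⊗σ₂)`. -/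
def spinFlip (ρ : Matrix (Fin 2 × Fin 2) (Fin 2 × Fin 2) ℂ) :
    Matrix (Fin 2 × Fin 2) (Fin 2 × Fin 2) ℂ :=
  (pauli 2 ⊗ₖ pauli 2) * ρ.map (starRingEnd ℂ) * (pauli 2 ⊗ₖ pauli 2)

theorem trace_of_charpoly_aux (M : Matrix (Fin 2 × Fin 2) (Fin 2 × Fin 2) ℂ) (lam : Fin 4 → ℝ)
    (h : M.charpoly = ∏ i : Fin 4, (X - C ((lam i : ℂ) ^ 2))) :
    M.trace.re = ∑ i, lam i ^ 2 := by
  have h1 := Matrix.trace_eq_neg_charpoly_nextCoeff M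
  rw [h, Polynomial.prod_X_sub_C_nextCoeff, neg_neg] at h1
  rw [h1]
  have : (∑ i, (lam i : ℂ) ^ 2) = ((∑ i, lam i ^ 2 : ℝ) : ℂ) := by push_cast; rfl
  rw [this, Complex.ofReal_re]

theorem max_sq_le_aux (lam : Fin 4 → ℝ)
    (hl01 : lam 1 ≤ lam 0) (hl12 : lam 2 ≤ lam 1) (hl23 : lam 3 ≤ lam 2) (hl3 : 0 ≤ lam 3) :
    max 0 (lam 0 - lam 1 - lam 2 - lam 3) ^ 2 ≤ ∑ i, lam i ^ 2 := by
  have h0 : max 0 (lam 0 - lam 1 - lam 2 - lam 3) ≤ lam 0 := max_le (by linarith) (by linarith)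
  have h1 : max 0 (lam 0 - lam 1 - lam 2 - lam 3) ^ 2 ≤ lam 0 ^ 2 :=
    pow_le_pow_left₀ (le_max_left _ _) h0 2
  rw [Fin.sum_univ_four]
  nlinarith [sq_nonneg (lam 1), sq_nonneg (lam 2), sq_nonneg (lam 3)]

/-- CKW monogamy of concurrence: for a pure three-qubit state,
`C(ρ_AB)² + C(ρ_BC)² ≤ 4 det ρ_B`. -/
theorem stmt19 (ψ : Fin 2 → Fin 2 → Fin 2 → ℂ)
    (hunit : ∑ a : Fin 2, ∑ b : Fin 2, ∑ c : Fin 2, Complex.normSq (ψ a b c) = 1)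
    (ρAB : Matrix (Fin 2 × Fin 2) (Fin 2 × Fin 2) ℂ)
    (hAB : ρAB = Matrix.of fun p q : Fin 2 × Fin 2 =>
      ∑ γ : Fin 2, ψ p.1 p.2 γ * (starRingEnd ℂ) (ψ q.1 q.2 γ))
    (ρBC : Matrix (Fin 2 × Fin 2) (Fin 2 × Fin 2) ℂ)
    (hBC : ρBC = Matrix.of fun p q : Fin 2 × Fin 2 =>
      ∑ a : Fin 2, ψ a p.1 p.2 * (starRingEnd ℂ) (ψ a q.1 q.2))
    (ρB : Matrix (Fin 2) (Fin 2) ℂ)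
    (hB : ρB = Matrix.of fun b b' : Fin 2 =>
      ∑ a : Fin 2, ∑ γ : Fin 2, ψ a b γ * (starRingEnd ℂ) (ψ a b' γ))
    (lam mu : Fin 4 → ℝ)
    (hl01 : lam 1 ≤ lam 0) (hl12 : lam 2 ≤ lam 1) (hl23 : lam 3 ≤ lam 2) (hl3 : 0 ≤ lam 3)
    (hlam : (ρAB * spinFlip ρAB).charpoly = ∏ i : Fin 4, (X - C ((lam i : ℂ) ^ 2)))
    (hm01 : mu 1 ≤ mu 0) (hm12 : mu 2 ≤ mu 1) (hm23 : mu 3 ≤ mu 2) (hm3 : 0 ≤ mu 3)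
    (hmu : (ρBC * spinFlip ρBC).charpoly = ∏ i : Fin 4, (X - C ((mu i : ℂ) ^ 2))) :
    max 0 (lam 0 - lam 1 - lam 2 - lam 3) ^ 2 + max 0 (mu 0 - mu 1 - mu 2 - mu 3) ^ 2
      ≤ 4 * (ρB.det).re := by
  have hA := max_sq_le_aux lam hl01 hl12 hl23 hl3
  have hM := max_sq_le_aux mu hm01 hm12 hm23 hm3
  rw [← trace_of_charpoly_aux _ _ hlam] at hA
  rw [← trace_of_charpoly_aux _ _ hmu] at hM
  have key : (ρAB * spinFlip ρAB).trace + (ρBC * spinFlip ρBC).trace = 4 * ρB.det := by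
    subst hAB hBC hB
    simp only [spinFlip, pauli, Matrix.trace, Matrix.diag, Matrix.mul_apply, Matrix.map_apply,
      Matrix.kroneckerMap_apply, Matrix.det_fin_two, Fintype.sum_prod_type, Fin.sum_univ_two,
      Matrix.of_apply, Matrix.cons_val', Matrix.cons_val_zero, Matrix.cons_val_one,
      Matrix.cons_val_fin_one, map_add, map_mul, Complex.conj_conj, mul_zero, zero_mul, add_zero,
      zero_add, mul_neg, neg_mul, neg_neg, Complex.I_mul_I, neg_zero, mul_one, one_mul]
    ring
  have hre := congrArg Complex.re key
  have h4 : (4 * ρB.det).re = 4 * ρB.det.re := by simp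
  rw [Complex.add_re, h4] at hre
  linarith
end
end
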